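/- arXiv:2007.13074 — 2 statements merged into one kernel-verified Lean document; each statement's English description precedes it below -/
import Mathlib

section
/- Let f = (f₁, f₂, f₃) : ℝ³ → ℝ³ be continuously differentiable with (∇ × f)(p) ≠ 0 for some p ∈ ℝ³, and let g : ℝ³ → ℝ be continuous. Then for every a, b ∈ ℝ⁴ there exist T > 0 and a continuously differentiable curve γ : [0, T] → ℝ³ with γ(0) = (a₁, a₂, a₃), γ(T) = (b₁, b₂, b₃) and b₄ − a₄ = ∫₀ᵀ ( g(γ(t)) + ⟨f(γ(t)), γ′(t)⟩ ) dt; i.e., the nonholonomic integrator on ℝ³ with drift g is controllable. -/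
/-- Partial derivative of a scalar function on ℝ³ in the `j`-th coordinate direction. -/
noncomputable def pderiv3 (g : (Fin 3 → ℝ) → ℝ) (j : Fin 3) (p : Fin 3 → ℝ) : ℝ :=
  fderiv ℝ g p (Pi.single j 1)

/-- The curl of a vector field on ℝ³. -/
noncomputable def curl3 (f : (Fin 3 → ℝ) → (Fin 3 → ℝ)) (p : Fin 3 → ℝ) : Fin 3 → ℝ :=
  ![pderiv3 (fun x => f x 2) 1 p - pderiv3 (fun x => f x 1) 2 p,
    pderiv3 (fun x => f x 0) 2 p - pderiv3 (fun x => f x 2) 0 p,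
    pderiv3 (fun x => f x 1) 0 p - pderiv3 (fun x => f x 0) 1 p]


/-!
Let the control run along a closed curve `C` from the parameter `0` to an arbitrary real parameter
`s`. The form `ω` then contributes `∫₀ˢ ω(C) C'`, which is unbounded in both directions as soon as
the circulation of `ω` around `C` is nonzero. Reaching `C` from the initial point, leaving it for
the final point, and the drift `g` together contribute an amount which is continuous in `s` and
bounded, because `C` has compact range and the total time is fixed. By the intermediate value
theorem every increment is attained.

A closed curve with nonzero circulation is a small ellipse: by first order expansion of `ω` at `p`,
the circulation around the ellipse with half-axes `ε u` and `ε w` is `π ε² dω(u, w) + o(ε²)`.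
-/

open Set Filter Topology MeasureTheory

variable {E : Type*} [NormedAddCommGroup E] [NormedSpace ℝ E]

section Circulation

theorem exists_eventually_norm_dilation_sub_le {F : Type*} [NormedAddCommGroup F]
    [NormedSpace ℝ F] {φ : E → F} {φ' : E →L[ℝ] F} {p : E} (hφ : HasFDerivAt φ φ' p) {v : ℝ → E}
    (hv : Continuous v) (a b : ℝ) :
    ∃ K, ∀ᶠ ε : ℝ in 𝓝 0, ∀ θ ∈ uIcc a b, ‖φ (p + ε • v θ) - φ p‖ ≤ K * ‖ε • v θ‖ := by
  obtain ⟨K, hK⟩ := hφ.isBigO_sub.bound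
  refine ⟨K, isCompact_uIcc.eventually_forall_of_forall_eventually fun θ _ ↦ ?_⟩
  have hlim : Tendsto (fun z : ℝ × ℝ ↦ p + z.1 • v z.2) (𝓝 (0, θ)) (𝓝 p) :=
    Continuous.tendsto' (by fun_prop) _ _ (by simp)
  filter_upwards [hlim.eventually hK] with z hz
  simpa using hz

theorem hasDerivAt_integral_dilation {F G : Type*} [NormedAddCommGroup F] [NormedSpace ℝ F]
    [NormedAddCommGroup G] [NormedSpace ℝ G] {ω : E → F →L[ℝ] G} {L : E →L[ℝ] F →L[ℝ] G} {p : E}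
    (hω : Continuous ω) (hL : HasFDerivAt ω L p) {v : ℝ → E} {v' : ℝ → F} (hv : Continuous v)
    (hv' : Continuous v') (a b : ℝ) :
    HasDerivAt (fun ε : ℝ ↦ ∫ θ in a..b, ω (p + ε • v θ) (v' θ))
      (∫ θ in a..b, L (v θ) (v' θ)) 0 := by
  have hcont (ε : ℝ) : Continuous fun θ ↦ ω (p + ε • v θ) (v' θ) := by fun_prop
  obtain ⟨K, hK⟩ := exists_eventually_norm_dilation_sub_le hL hv a b
  rw [hasDerivAt_iff_tendsto_slope_zero]
  have hslope (ε : ℝ) : ε⁻¹ • ((∫ θ in a..b, ω (p + (0 + ε) • v θ) (v' θ)) -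
      ∫ θ in a..b, ω (p + (0 : ℝ) • v θ) (v' θ)) =
        ∫ θ in a..b, ε⁻¹ • (ω (p + ε • v θ) - ω p) (v' θ) := by
    rw [← intervalIntegral.integral_sub ((hcont _).intervalIntegrable _ _)
      ((hcont _).intervalIntegrable _ _), ← intervalIntegral.integral_smul]
    simp
  simp only [hslope]
  refine intervalIntegral.tendsto_integral_filter_of_dominated_convergence
    (fun θ ↦ K * ‖v θ‖ * ‖v' θ‖) (.of_forall fun ε ↦ ?_) ?_
    (Continuous.intervalIntegrable (by fun_prop) _ _) (.of_forall fun θ _ ↦ ?_)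
  · exact Continuous.aestronglyMeasurable (by fun_prop)
  · filter_upwards [nhdsWithin_le_nhds hK, self_mem_nhdsWithin] with ε hε hε0
    refine .of_forall fun θ hθ ↦ ?_
    have hεpos : 0 < ‖ε‖ := norm_pos_iff.2 hε0
    calc ‖ε⁻¹ • (ω (p + ε • v θ) - ω p) (v' θ)‖
        ≤ ‖ε‖⁻¹ * (‖ω (p + ε • v θ) - ω p‖ * ‖v' θ‖) := by
          rw [norm_smul, norm_inv]
          gcongr
          exact ContinuousLinearMap.le_opNorm _ _
      _ ≤ ‖ε‖⁻¹ * (K * ‖ε • v θ‖ * ‖v' θ‖) := by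
          gcongr
          exact hε θ (uIoc_subset_uIcc hθ)
      _ = K * ‖v θ‖ * ‖v' θ‖ := by
          rw [norm_smul]
          field_simp
  · have hline : HasDerivAt (fun ε : ℝ ↦ ω (p + ε • v θ)) (L (v θ)) 0 := hL.hasLineDerivAt (v θ)
    simpa using (hline.clm_apply (hasDerivAt_const 0 (v' θ))).tendsto_slope_zero

/-- The ellipse with centre `p` and conjugate half-axes `u` and `w`, parametrized by the angle. -/
noncomputable def ellipse (p u w : E) (θ : ℝ) : E :=
  p + (Real.cos θ • u + Real.sin θ • w)

theorem contDiff_ellipse (p u w : E) {n : WithTop ℕ∞} : ContDiff ℝ n (ellipse p u w) := by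
  unfold ellipse
  fun_prop

theorem ellipse_periodic (p u w : E) : Function.Periodic (ellipse p u w) (2 * Real.pi) :=
  fun θ ↦ by simp [ellipse]

theorem ellipse_smul (p u w : E) (ε θ : ℝ) :
    ellipse p (ε • u) (ε • w) θ = p + ε • ellipse 0 u w θ := by
  simp only [ellipse]
  module

theorem deriv_ellipse (p u w : E) : deriv (ellipse p u w) = ellipse 0 w (-u) := by
  ext1 θ
  have h := (((Real.hasDerivAt_cos θ).smul_const u).add
    ((Real.hasDerivAt_sin θ).smul_const w)).const_add p
  refine HasDerivAt.deriv (f := ellipse p u w) h |>.trans ?_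
  simp only [ellipse]
  module

theorem integral_bilinear_ellipse (L : E →L[ℝ] E →L[ℝ] ℝ) (u w : E) :
    ∫ θ in 0..2 * Real.pi, L (ellipse 0 u w θ) (ellipse 0 w (-u) θ) =
      Real.pi * (L u w - L w u) := by
  have hexpand (θ : ℝ) : L (ellipse 0 u w θ) (ellipse 0 w (-u) θ) =
      L u w * Real.cos θ ^ 2 - L w u * Real.sin θ ^ 2 +
        (L w w - L u u) * (Real.sin θ * Real.cos θ) := by
    simp only [ellipse, map_add, map_smul, map_neg, add_apply, smul_apply, zero_add,
      smul_eq_mul]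
    ring
  simp only [hexpand]
  rw [intervalIntegral.integral_add, intervalIntegral.integral_sub]
  · simp only [intervalIntegral.integral_const_mul, integral_cos_sq, integral_sin_sq,
      integral_sin_mul_cos₁]
    simp only [Real.cos_two_pi, Real.sin_two_pi, Real.cos_zero, Real.sin_zero]
    ring
  all_goals exact Continuous.intervalIntegrable (by fun_prop) _ _

theorem integral_linear_ellipse (ℓ : E →L[ℝ] ℝ) (u w : E) :
    ∫ θ in 0..2 * Real.pi, ℓ (ellipse 0 u w θ) = 0 := by
  have hexpand (θ : ℝ) : ℓ (ellipse 0 u w θ) = ℓ u * Real.cos θ + ℓ w * Real.sin θ := by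
    simp [ellipse, mul_comm]
  simp only [hexpand]
  rw [intervalIntegral.integral_add]
  · simp
  all_goals exact Continuous.intervalIntegrable (by fun_prop) _ _

theorem exists_ellipse_circulation_pos {ω : E → E →L[ℝ] ℝ} {L : E →L[ℝ] E →L[ℝ] ℝ} {p u w : E}
    (hω : Continuous ω) (hL : HasFDerivAt ω L p) (huw : L w u < L u w) :
    ∃ u' w' : E,
      0 < ∫ θ in 0..2 * Real.pi, ω (ellipse p u' w' θ) (deriv (ellipse p u' w') θ) := by
  let J (ε : ℝ) : ℝ := ∫ θ in 0..2 * Real.pi, ω (p + ε • ellipse 0 u w θ) (ellipse 0 w (-u) θ)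
  have hJ : HasDerivAt J (Real.pi * (L u w - L w u)) 0 := by
    rw [← integral_bilinear_ellipse]
    exact hasDerivAt_integral_dilation hω hL (contDiff_ellipse 0 u w (n := 0)).continuous
      (contDiff_ellipse 0 w (-u) (n := 0)).continuous _ _
  have hJ0 : J 0 = 0 := by simpa [J] using integral_linear_ellipse (ω p) w (-u)
  have hJ' : 0 < deriv J 0 := hJ.deriv ▸ mul_pos Real.pi_pos (sub_pos.2 huw)
  have hsign : ∀ᶠ ε in 𝓝[>] 0, SignType.sign (J ε) = SignType.sign (ε - 0) :=
    nhdsWithin_le_nhds (eventually_nhdsWithin_sign_eq_of_deriv_pos hJ' hJ0)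
  obtain ⟨ε, hε, hεpos : 0 < ε⟩ := (hsign.and self_mem_nhdsWithin).exists
  have hJε : 0 < J ε := by
    rwa [sub_zero, sign_pos hεpos, sign_eq_one_iff] at hε
  refine ⟨ε • u, ε • w, (mul_pos hεpos hJε).trans_eq ?_⟩
  rw [← intervalIntegral.integral_const_mul]
  refine intervalIntegral.integral_congr fun θ _ ↦ ?_
  simp only [deriv_ellipse, ← smul_neg, ellipse_smul, zero_add, map_smul, smul_eq_mul]

end Circulation

theorem surjective_add_primitive_of_periodic {R h : ℝ → ℝ} {c : ℝ} (hR : Continuous R)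
    (hRb : Bornology.IsBounded (range R)) (hh : Continuous h) (hper : Function.Periodic h c)
    (hc : 0 < c) (hpos : 0 < ∫ θ in 0..c, h θ) :
    Function.Surjective fun s ↦ R s + ∫ θ in 0..s, h θ := by
  obtain ⟨M, hM⟩ := hRb.exists_norm_le
  have hM' (s : ℝ) : |R s| ≤ M := hM _ (mem_range_self s)
  refine (hR.add (intervalIntegral.continuous_primitive
    (fun a b ↦ hh.intervalIntegrable a b) 0)).surjective ?_ ?_
  · exact tendsto_atTop_add_left_of_le _ (-M) (fun s ↦ (abs_le.1 (hM' s)).1)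
      (hper.tendsto_atTop_intervalIntegral_of_pos hpos hc)
  · exact tendsto_atBot_add_left_of_ge _ M (fun s ↦ (abs_le.1 (hM' s)).2)
      (hper.tendsto_atBot_intervalIntegral_of_pos hpos hc)

theorem isBounded_range_integral_comp {X S G : Type*} [TopologicalSpace X]
    [NormedAddCommGroup G] [NormedSpace ℝ G] {Φ : ℝ × X → G} (hΦ : Continuous Φ) {K : Set X}
    (hK : IsCompact K) {ζ : S → ℝ → X} (hζ : ∀ s t, ζ s t ∈ K) (a b : ℝ) :
    Bornology.IsBounded (range fun s ↦ ∫ t in a..b, Φ (t, ζ s t)) := by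
  obtain ⟨M, hM⟩ := (isCompact_uIcc.prod hK).exists_bound_of_continuousOn hΦ.continuousOn
  refine isBounded_iff_forall_norm_le.2 ⟨M * |b - a|, forall_mem_range.2 fun s ↦ ?_⟩
  exact intervalIntegral.norm_integral_le_of_norm_le_const fun t ht ↦
    hM _ ⟨uIoc_subset_uIcc ht, hζ s t⟩

section Ramp

/-- A smooth step: for `0 < T` it rises from `0` to `1` while `t` runs through
`[k T / 3, (k + 1) T / 3]`, so that `k = 0, 1, 2` are the three stages of a motion during
`[0, T]`. -/
noncomputable def ramp (T k t : ℝ) : ℝ :=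
  Real.smoothTransition (3 * t / T - k)

variable (T : ℝ) {k t : ℝ}

@[fun_prop]
theorem contDiff_ramp (k : ℝ) {n : ℕ∞} : ContDiff ℝ n (ramp T k) :=
  Real.smoothTransition.contDiff.comp (by fun_prop)

@[fun_prop]
theorem continuous_ramp (k : ℝ) : Continuous (ramp T k) :=
  (contDiff_ramp T k (n := 0)).continuous

@[fun_prop]
theorem continuous_deriv_ramp (k : ℝ) : Continuous (deriv (ramp T k)) :=
  (contDiff_ramp T k (n := 1)).continuous_deriv le_rfl

theorem hasDerivAt_ramp (k t : ℝ) : HasDerivAt (ramp T k) (deriv (ramp T k) t) t :=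
  ((contDiff_ramp T k (n := 1)).differentiable one_ne_zero t).hasDerivAt

theorem ramp_zero_right (hk : 0 ≤ k) : ramp T k 0 = 0 :=
  Real.smoothTransition.zero_of_nonpos (by simpa)

theorem ramp_mem_Icc (k t : ℝ) : ramp T k t ∈ Icc 0 1 :=
  ⟨Real.smoothTransition.nonneg _, Real.smoothTransition.le_one _⟩

variable {T}

theorem ramp_self_right (hT : T ≠ 0) (hk : k ≤ 2) : ramp T k T = 1 :=
  Real.smoothTransition.one_of_one_le (by rw [mul_div_cancel_right₀ _ hT]; linarith)

theorem ramp_mem_Ioo_of_deriv_ne_zero (h : deriv (ramp T k) t ≠ 0) : ramp T k t ∈ Ioo 0 1 := by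
  refine ⟨(ramp_mem_Icc T k t).1.lt_of_ne fun h0 ↦ h ?_,
    (ramp_mem_Icc T k t).2.lt_of_ne fun h1 ↦ h ?_⟩
  · exact IsLocalMin.deriv_eq_zero (.of_forall fun r ↦ h0 ▸ (ramp_mem_Icc T k r).1)
  · exact IsLocalMax.deriv_eq_zero (.of_forall fun r ↦ h1 ▸ (ramp_mem_Icc T k r).2)

theorem ramp_eq_of_deriv_ramp_one_ne_zero (h : deriv (ramp T 1) t ≠ 0) :
    ramp T 0 t = 1 ∧ ramp T 2 t = 0 := by
  obtain ⟨h0, h1⟩ := ramp_mem_Ioo_of_deriv_ne_zero h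
  have hlower : 0 < 3 * t / T - 1 := by
    by_contra! hle
    exact h0.ne' (Real.smoothTransition.zero_of_nonpos hle)
  have hupper : 3 * t / T - 1 < 1 := by
    by_contra! hle
    exact h1.ne (Real.smoothTransition.one_of_one_le hle)
  exact ⟨Real.smoothTransition.one_of_one_le (by linarith),
    Real.smoothTransition.zero_of_nonpos (by linarith)⟩

end Ramp

section Steering

/-- The curve which goes straight from `x` to `z` during the first third of `[0, T]`, rests at `z`
during the second and goes straight from `z` to `y` during the last. -/
noncomputable def connector (x y : E) (T : ℝ) (z : E) (t : ℝ) : E :=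
  x + ramp T 0 t • (z - x) + ramp T 2 t • (y - z)

/-- The `connector` whose resting point is replaced by a motion along `C`, which runs through the
parameters from `0` to `s` during the second third of `[0, T]`. -/
noncomputable def connectorAlong (C : ℝ → E) (x y : E) (T s t : ℝ) : E :=
  connector x y T (C (s * ramp T 1 t)) t

variable (x y : E) {T : ℝ}

theorem deriv_connector (z : E) (t : ℝ) : deriv (connector x y T z) t =
    deriv (ramp T 0) t • (z - x) + deriv (ramp T 2) t • (y - z) :=
  ((((hasDerivAt_ramp T 0 t).smul_const (z - x)).const_add x).add
    ((hasDerivAt_ramp T 2 t).smul_const (y - z))).deriv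

theorem connector_of_deriv_ramp_one_ne_zero {t : ℝ} (ht : deriv (ramp T 1) t ≠ 0) (z : E) :
    connector x y T z t = z := by
  obtain ⟨h0, h2⟩ := ramp_eq_of_deriv_ramp_one_ne_zero ht
  simp [connector, h0, h2]

variable {C : ℝ → E}

theorem contDiff_connectorAlong {n : ℕ∞} (hC : ContDiff ℝ n C) (s : ℝ) :
    ContDiff ℝ n (connectorAlong C x y T s) := by
  unfold connectorAlong connector
  fun_prop

theorem deriv_connectorAlong (hC : Differentiable ℝ C) (s t : ℝ) :
    deriv (connectorAlong C x y T s) t =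
      deriv (connector x y T (C (s * ramp T 1 t))) t +
        (s * deriv (ramp T 1) t) • deriv C (s * ramp T 1 t) := by
  have hz : HasDerivAt (fun t ↦ C (s * ramp T 1 t))
      ((s * deriv (ramp T 1) t) • deriv C (s * ramp T 1 t)) t :=
    (hC _).hasDerivAt.scomp t ((hasDerivAt_ramp T 1 t).const_mul s)
  have hγ := (((hasDerivAt_ramp T 0 t).smul (hz.sub_const x)).const_add x).add
    ((hasDerivAt_ramp T 2 t).smul (hz.const_sub y))
  -- The resting point moves only while the first stage is over and the last has not begun.
  have hstage : deriv (ramp T 1) t * (ramp T 0 t - ramp T 2 t) = deriv (ramp T 1) t := by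
    by_cases ht : deriv (ramp T 1) t = 0
    · simp [ht]
    · obtain ⟨h0, h2⟩ := ramp_eq_of_deriv_ramp_one_ne_zero ht
      simp [h0, h2]
  refine HasDerivAt.deriv (f := connectorAlong C x y T s) hγ |>.trans ?_
  rw [deriv_connector]
  nth_rw 3 [← hstage]
  module

/-- The rate `g + ω(velocity)` along `connector x y T z`, as a function of the time and of the
resting point `z`. -/
noncomputable def connectorRate (ω : E → E →L[ℝ] ℝ) (g : E → ℝ) (x y : E) (T t : ℝ) (z : E) : ℝ :=
  g (connector x y T z t) + ω (connector x y T z t) (deriv (connector x y T z) t)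

variable {ω : E → E →L[ℝ] ℝ} {g : E → ℝ}

theorem continuous_connectorRate (hω : Continuous ω) (hg : Continuous g) :
    Continuous fun q : ℝ × E ↦ connectorRate ω g x y T q.1 q.2 := by
  simp only [connectorRate, deriv_connector, connector]
  fun_prop

theorem rate_connectorAlong (hC : Differentiable ℝ C) (s t : ℝ) :
    g (connectorAlong C x y T s t) +
        ω (connectorAlong C x y T s t) (deriv (connectorAlong C x y T s) t) =
      connectorRate ω g x y T t (C (s * ramp T 1 t)) +
        ω (C (s * ramp T 1 t)) (deriv C (s * ramp T 1 t)) * (s * deriv (ramp T 1) t) := by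
  rw [deriv_connectorAlong x y hC, map_add, map_smul, smul_eq_mul, ← add_assoc]
  by_cases ht : deriv (ramp T 1) t = 0
  · simp [ht, connectorRate, connectorAlong]
  · rw [show connectorAlong C x y T s t = C (s * ramp T 1 t) from
      connector_of_deriv_ramp_one_ne_zero x y ht _]
    simp only [connectorRate, connector_of_deriv_ramp_one_ne_zero x y ht]
    ring

theorem integral_comp_mul_ramp_one (hT : T ≠ 0) {h : ℝ → ℝ} (hh : Continuous h) (s : ℝ) :
    ∫ t in 0..T, h (s * ramp T 1 t) * (s * deriv (ramp T 1) t) = ∫ θ in 0..s, h θ := by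
  have hsubst := intervalIntegral.integral_comp_mul_deriv (a := 0) (b := T)
    (fun t _ ↦ (hasDerivAt_ramp T 1 t).const_mul s) (by fun_prop) hh
  simpa [ramp_zero_right, ramp_self_right hT] using hsubst

theorem integral_rate_connectorAlong (hω : Continuous ω) (hg : Continuous g)
    (hC : ContDiff ℝ 1 C) (hT : T ≠ 0) (s : ℝ) :
    ∫ t in 0..T, (g (connectorAlong C x y T s t) +
        ω (connectorAlong C x y T s t) (deriv (connectorAlong C x y T s) t)) =
      (∫ t in 0..T, connectorRate ω g x y T t (C (s * ramp T 1 t))) +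
        ∫ θ in 0..s, ω (C θ) (deriv C θ) := by
  have hC' : Continuous (deriv C) := hC.continuous_deriv le_rfl
  have hCc : Continuous C := hC.continuous
  have hrate : Continuous fun t ↦ connectorRate ω g x y T t (C (s * ramp T 1 t)) :=
    (continuous_connectorRate x y hω hg).comp (by fun_prop : Continuous fun t ↦
      (t, C (s * ramp T 1 t)))
  simp only [rate_connectorAlong x y (hC.differentiable one_ne_zero)]
  rw [intervalIntegral.integral_add (hrate.intervalIntegrable _ _)
    (Continuous.intervalIntegrable (by fun_prop) _ _),
    integral_comp_mul_ramp_one hT (by fun_prop : Continuous fun θ ↦ ω (C θ) (deriv C θ))]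

theorem exists_connectorAlong_integral_eq (hω : Continuous ω) (hg : Continuous g) {c : ℝ}
    (hC : ContDiff ℝ 1 C) (hper : Function.Periodic C c) (hc : 0 < c)
    (hpos : 0 < ∫ θ in 0..c, ω (C θ) (deriv C θ)) (hT : T ≠ 0) (r : ℝ) :
    ∃ s, ∫ t in 0..T, (g (connectorAlong C x y T s t) +
      ω (connectorAlong C x y T s t) (deriv (connectorAlong C x y T s) t)) = r := by
  have hCc : Continuous C := hC.continuous
  have hC' : Continuous (deriv C) := hC.continuous_deriv le_rfl
  have hrate := continuous_connectorRate x y (T := T) hω hg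
  simp only [integral_rate_connectorAlong x y hω hg hC hT]
  refine surjective_add_primitive_of_periodic ?_ ?_ (by fun_prop) (fun θ ↦ ?_) hc hpos r
  · refine intervalIntegral.continuous_parametric_intervalIntegral_of_continuous' ?_ _ _
    exact hrate.comp (by fun_prop : Continuous fun q : ℝ × ℝ ↦ (q.2, C (q.1 * ramp T 1 q.2)))
  · exact isBounded_range_integral_comp hrate (hper.compact_of_continuous hc.ne' hCc)
      (fun s t ↦ mem_range_self (s * ramp T 1 t)) 0 T
  · have hper' : deriv C (θ + c) = deriv C θ := by
      rw [← deriv_comp_add_const, funext hper]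
    rw [hper, hper']

end Steering

theorem controllability_nonholonomic_integrator_with_drift_general {ω : E → E →L[ℝ] ℝ}
    (hω : Continuous ω) {p u w : E} {L : E →L[ℝ] E →L[ℝ] ℝ} (hL : HasFDerivAt ω L p)
    (huw : L u w ≠ L w u) {g : E → ℝ} (hg : Continuous g) (x y : E) (r : ℝ) {T : ℝ} (hT : 0 < T) :
    ∃ γ : ℝ → E, ContDiff ℝ (⊤ : ℕ∞) γ ∧ γ 0 = x ∧ γ T = y ∧
      ∫ t in 0..T, (g (γ t) + ω (γ t) (deriv γ t)) = r := by
  wlog hlt : L w u < L u w generalizing u w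
  · exact this huw.symm (huw.lt_of_le (not_lt.1 hlt))
  obtain ⟨u', w', hpos⟩ := exists_ellipse_circulation_pos hω hL hlt
  obtain ⟨s, hs⟩ := exists_connectorAlong_integral_eq x y hω hg (contDiff_ellipse p u' w')
    (ellipse_periodic p u' w') Real.two_pi_pos hpos hT.ne' r
  exact ⟨_, contDiff_connectorAlong x y (contDiff_ellipse p u' w') s,
    by simp [connectorAlong, connector, ramp_zero_right],
    by simp [connectorAlong, connector, ramp_self_right hT.ne'], hs⟩

open Matrix in
theorem exists_fderiv_dotProduct_ne_of_curl3_ne_zero {f : (Fin 3 → ℝ) → Fin 3 → ℝ}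
    {p : Fin 3 → ℝ} (hf : DifferentiableAt ℝ f p) (hcurl : curl3 f p ≠ 0) :
    ∃ u w, fderiv ℝ f p u ⬝ᵥ w ≠ fderiv ℝ f p w ⬝ᵥ u := by
  have hpderiv (i j : Fin 3) :
      pderiv3 (fun x ↦ f x j) i p = fderiv ℝ f p (Pi.single i 1) ⬝ᵥ Pi.single j 1 := by
    rw [pderiv3, (hasFDerivAt_pi'.1 hf.hasFDerivAt j).fderiv]
    simp
  contrapose! hcurl
  simp [curl3, hpderiv, hcurl]

theorem controllability_nonholonomic_integrator_with_drift
    (f : (Fin 3 → ℝ) → (Fin 3 → ℝ)) (hf : ContDiff ℝ 1 f)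
    (hcurl : ∃ p : Fin 3 → ℝ, curl3 f p ≠ 0)
    (g : (Fin 3 → ℝ) → ℝ) (hg : Continuous g) :
    ∀ a b : Fin 4 → ℝ, ∃ T : ℝ, 0 < T ∧ ∃ γ : ℝ → (Fin 3 → ℝ),
      ContDiff ℝ 1 γ ∧ (∀ i : Fin 3, γ 0 i = a i.castSucc) ∧
      (∀ i : Fin 3, γ T i = b i.castSucc) ∧
      b 3 - a 3 =
        ∫ t in (0:ℝ)..T, (g (γ t) + ∑ i : Fin 3, f (γ t) i * deriv γ t i) := by
  intro a b
  obtain ⟨p, hp⟩ := hcurl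
  have hfp : DifferentiableAt ℝ f p := hf.differentiable one_ne_zero p
  obtain ⟨u, w, huw⟩ := exists_fderiv_dotProduct_ne_of_curl3_ne_zero hfp hp
  let B : (Fin 3 → ℝ) →L[ℝ] (Fin 3 → ℝ) →L[ℝ] ℝ := (dotProductBilin ℝ ℝ).toContinuousBilinearMap
  obtain ⟨γ, hγ, hγ0, hγ1, hint⟩ := controllability_nonholonomic_integrator_with_drift_general
    (B.continuous.comp hf.continuous) (B.hasFDerivAt.comp p hfp.hasFDerivAt) huw hg
    (fun i ↦ a i.castSucc) (fun i ↦ b i.castSucc) (b 3 - a 3) one_pos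
  exact ⟨1, one_pos, γ, hγ.of_le (mod_cast le_top), congrFun hγ0, congrFun hγ1, hint.symm⟩
end

section
/- Let c₁, c₂ ∈ ℝ and define x₁(t) = (c₁/(2π)) sin(2πt) and x₂(t) = (c₂/(2π)) (1 − cos(2πt)). Then x₁(1) = 0, x₂(1) = 0, and ∫₀¹ ( x₂(t)² · c₁ cos(2πt) − x₁(t)² · c₂ sin(2πt) ) dt = −c₁c₂²/(4π²). Consequently, the inputs u₁(t) = c₁ cos(2πt), u₂(t) = c₂ sin(2πt) steer the system ẋ₁ = u₁, ẋ₂ = u₂, ẋ₃ = x₂²u₁ − x₁²u₂ from the origin at t = 0 to (0, 0, −c₁c₂²/(4π²)) at t = 1. -/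
open Real

/-! With `θ = 2πt`, the integral becomes the circulation of `x₂² dx₁ - x₁² dx₂` along an ellipse,
a trigonometric polynomial integrated over a full period. Monomials of odd degree change sign under
`θ ↦ θ + π` and integrate to zero; this removes the `x₁` term altogether and leaves only `-2 cos² θ`
from `(1 - cos θ)² cos θ`. -/

theorem intervalIntegral_eq_zero_of_antiperiodic {E : Type*} [NormedAddCommGroup E]
    [NormedSpace ℝ E] {f : ℝ → E} {c : ℝ} (hf : Function.Antiperiodic f c) (a : ℝ) :
    ∫ x in a..a + 2 * c, f x = 0 := by
  have translate_neg : ∫ x in a + c..a + c + 2 * c, f x = -∫ x in a..a + 2 * c, f x := by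
    rw [add_right_comm a c, ← intervalIntegral.integral_comp_add_right,
      ← intervalIntegral.integral_neg]
    exact intervalIntegral.integral_congr fun x _ => hf x
  have translate_eq : ∫ x in a + c..a + c + 2 * c, f x = ∫ x in a..a + 2 * c, f x :=
    hf.periodic_two_mul.intervalIntegral_add_eq (a + c) a
  have : IsAddTorsionFree E := .of_isTorsionFree ℝ E
  exact self_eq_neg.mp (translate_eq.symm.trans translate_neg)

theorem antiperiodic_pow_of_odd {α R : Type*} [Add α] [Monoid R] [HasDistribNeg R]
    {f : α → R} {c : α} (hf : Function.Antiperiodic f c) {n : ℕ} (hn : Odd n) :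
    Function.Antiperiodic (fun x => f x ^ n) c :=
  fun x => by simp only [hf x, hn.neg_pow]

theorem integral_sin_pow_of_odd_over_period {n : ℕ} (hn : Odd n) (a : ℝ) :
    ∫ θ in a..a + 2 * π, sin θ ^ n = 0 :=
  intervalIntegral_eq_zero_of_antiperiodic (antiperiodic_pow_of_odd sin_antiperiodic hn) a

theorem integral_cos_pow_of_odd_over_period {n : ℕ} (hn : Odd n) (a : ℝ) :
    ∫ θ in a..a + 2 * π, cos θ ^ n = 0 :=
  intervalIntegral_eq_zero_of_antiperiodic (antiperiodic_pow_of_odd cos_antiperiodic hn) a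

theorem integral_cos_sq_over_period (a : ℝ) : ∫ θ in a..a + 2 * π, cos θ ^ 2 = π := by
  rw [integral_cos_sq, cos_add_two_pi, sin_add_two_pi]
  ring

theorem integral_one_sub_cos_sq_mul_cos_over_period (a : ℝ) :
    ∫ θ in a..a + 2 * π, (1 - cos θ) ^ 2 * cos θ = -(2 * π) := by
  have intervalIntegrable_cos_pow (n : ℕ) :
      IntervalIntegrable (fun θ => cos θ ^ n) MeasureTheory.volume a (a + 2 * π) :=
    (continuous_cos.pow n).intervalIntegrable _ _
  calc ∫ θ in a..a + 2 * π, (1 - cos θ) ^ 2 * cos θ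
      = ∫ θ in a..a + 2 * π, (cos θ ^ 1 + cos θ ^ 3 - 2 * cos θ ^ 2) := by
        congr with θ
        ring
    _ = (∫ θ in a..a + 2 * π, cos θ ^ 1) + (∫ θ in a..a + 2 * π, cos θ ^ 3)
          - 2 * ∫ θ in a..a + 2 * π, cos θ ^ 2 := by
        rw [intervalIntegral.integral_sub
            ((intervalIntegrable_cos_pow 1).add (intervalIntegrable_cos_pow 3))
            ((intervalIntegrable_cos_pow 2).const_mul 2),
          intervalIntegral.integral_add (intervalIntegrable_cos_pow 1)
            (intervalIntegrable_cos_pow 3),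
          intervalIntegral.integral_const_mul]
    _ = -(2 * π) := by
        rw [integral_cos_pow_of_odd_over_period odd_one,
          integral_cos_pow_of_odd_over_period (by decide), integral_cos_sq_over_period]
        ring

/-- The circulation of `x₂² dx₁ - x₁² dx₂` along the ellipse `x₁ = α sin θ`, `x₂ = β (1 - cos θ)`.
By Green's theorem it is `-2 ∬ (x₁ + x₂)`, that is, `-2` times the signed area `π α β` times the
sum `β` of the coordinates of the centre, which explains the value. -/
theorem integral_ellipse_circulation (α β a : ℝ) :
    ∫ θ in a..a + 2 * π,
        ((β * (1 - cos θ)) ^ 2 * (α * cos θ) - (α * sin θ) ^ 2 * (β * sin θ)) =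
      -(2 * π * α * β ^ 2) :=
  calc _ = ∫ θ in a..a + 2 * π,
          (α * β ^ 2 * ((1 - cos θ) ^ 2 * cos θ) - α ^ 2 * β * sin θ ^ 3) := by
        congr with θ
        ring
    _ = α * β ^ 2 * (∫ θ in a..a + 2 * π, (1 - cos θ) ^ 2 * cos θ)
          - α ^ 2 * β * ∫ θ in a..a + 2 * π, sin θ ^ 3 := by
        rw [intervalIntegral.integral_sub (Continuous.intervalIntegrable (by fun_prop) _ _)
            (Continuous.intervalIntegrable (by fun_prop) _ _),
          intervalIntegral.integral_const_mul, intervalIntegral.integral_const_mul]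
    _ = -(2 * π * α * β ^ 2) := by
        rw [integral_one_sub_cos_sq_mul_cos_over_period,
          integral_sin_pow_of_odd_over_period (by decide)]
        ring

theorem steering_planar_rigid_body_two_oscillators
    (c₁ c₂ : ℝ) (x₁ x₂ : ℝ → ℝ)
    (hx₁ : ∀ t, x₁ t = (c₁ / (2 * π)) * Real.sin (2 * π * t))
    (hx₂ : ∀ t, x₂ t = (c₂ / (2 * π)) * (1 - Real.cos (2 * π * t))) :
    x₁ 1 = 0 ∧ x₂ 1 = 0 ∧
    (∫ t in (0:ℝ)..1,
        ((x₂ t) ^ 2 * (c₁ * Real.cos (2 * π * t)) -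
         (x₁ t) ^ 2 * (c₂ * Real.sin (2 * π * t)))) =
      -(c₁ * c₂ ^ 2) / (4 * π ^ 2) := by
  refine ⟨by simp [hx₁], by simp [hx₂], ?_⟩
  let α := c₁ / (2 * π)
  let β := c₂ / (2 * π)
  let circulationDensity (θ : ℝ) : ℝ :=
    (β * (1 - cos θ)) ^ 2 * (α * cos θ) - (α * sin θ) ^ 2 * (β * sin θ)
  calc _ = 2 * π * ∫ t in (0:ℝ)..1, circulationDensity (2 * π * t) := by
        rw [← intervalIntegral.integral_const_mul]
        congr with t
        simp only [hx₁, hx₂, circulationDensity, α, β]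
        field_simp
    _ = ∫ θ in 0..0 + 2 * π, circulationDensity θ := by
        rw [intervalIntegral.mul_integral_comp_mul_left, mul_zero, mul_one, zero_add]
    _ = -(2 * π * α * β ^ 2) := integral_ellipse_circulation α β 0
    _ = -(c₁ * c₂ ^ 2) / (4 * π ^ 2) := by
        simp only [α, β]
        field_simp
        ring
end
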